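/- arXiv:2411.19293 — 2 statements merged into one kernel-verified Lean document; each statement's English description precedes it below -/
import Mathlib

section
/- Gårding-type bounds for the quadratic form of L: there exists a constant C = C(n) such that for every compactly supported smooth map u = (u_1,…,u_n): ℝⁿ → (n×n skew-symmetric real matrices)ⁿ, (1/2)·∫ Σ_{i,j} ‖∂_i u_j‖_F² ρ dy − C·∫ ‖u‖_F² ρ dy ≤ ∫ ⟨u, −Lu⟩_F ρ dy ≤ 2·∫ Σ_{i,j} ‖∂_i u_j‖_F² ρ dy + C·∫ ‖u‖_F² ρ dy, where ⟨u, −Lu⟩_F = Σ_j ⟨u_j, −(Lu)_j⟩_F and ‖u‖_F² = Σ_j ‖u_j‖_F². -/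
open scoped BigOperators

noncomputable section

/-- Euclidean space `ℝⁿ`. -/
abbrev En (n : ℕ) := EuclideanSpace ℝ (Fin n)

/-- `n × n` real matrices, represented entrywise. -/
abbrev Mat (n : ℕ) := Fin n → Fin n → ℝ

variable {n : ℕ}

/-- Frobenius inner product `⟨A,B⟩_F = tr(AᵀB) = Σ_{μν} A_{μν} B_{μν}`. -/
def fipE (A B : Mat n) : ℝ := ∑ μ, ∑ ν, A μ ν * B μ ν

/-- Frobenius norm. -/
def fnormE (A : Mat n) : ℝ := Real.sqrt (fipE A A)

/-- Matrix commutator `[A, B] = AB − BA`, entrywise. -/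
def brkt (A B : Mat n) : Mat n := fun μ ν => ∑ k, (A μ k * B k ν - B μ k * A k ν)

/-- `A` is skew-symmetric. -/
def skewM (A : Mat n) : Prop := ∀ μ ν, A ν μ = -A μ ν

/-- Partial derivative `∂_i f` of a scalar function on `ℝⁿ`. -/
def pder (i : Fin n) (f : En n → ℝ) (y : En n) : ℝ :=
  fderiv ℝ f y (EuclideanSpace.single i 1)

/-- Euclidean Laplacian `Δf = Σ_i ∂_i ∂_i f` of a scalar function on `ℝⁿ`. -/
def lapS (f : En n → ℝ) (y : En n) : ℝ := ∑ i, pder i (fun z => pder i f z) y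

/-- Componentwise partial derivative `∂_i u` of a matrix-valued function on `ℝⁿ`. -/
def pderM (i : Fin n) (u : En n → Mat n) (y : En n) : Mat n :=
  fun μ ν => pder i (fun z => u z μ ν) y

/-- Componentwise Laplacian `Δu` of a matrix-valued function on `ℝⁿ`. -/
def lapM (u : En n → Mat n) (y : En n) : Mat n := fun μ ν => lapS (fun z => u z μ ν) y

/-- The constant `a = √(n−2)/(2√2)`. -/
def aC (n : ℕ) : ℝ := Real.sqrt ((n : ℝ) - 2) / (2 * Real.sqrt 2)

/-- The constant `b = (1/2)(6n − 12 − (n+2)√(2n−4))`. -/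
def bC (n : ℕ) : ℝ := (1 / 2) * (6 * (n : ℝ) - 12 - ((n : ℝ) + 2) * Real.sqrt (2 * (n : ℝ) - 4))

/-- `σ_i(y)`, the skew matrix with entries `(σ_i(y))^μ_ν = δ_{iν} y^μ − δ_{iμ} y^ν`. -/
def sigmaM (i : Fin n) (y : En n) : Mat n :=
  fun μ ν => (if i = ν then y μ else 0) - (if i = μ then y ν else 0)

/-- The soliton connection `W_i(y) = σ_i(y)/(a|y|² + b)`. -/
def Wc (i : Fin n) (y : En n) : Mat n :=
  fun μ ν => sigmaM i y μ ν / (aC n * ‖y‖ ^ 2 + bC n)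

/-- The curvature `F_{ij} = ∂_i W_j − ∂_j W_i + [W_i, W_j]` of the soliton connection `W`. -/
def Fc (i j : Fin n) (y : En n) : Mat n :=
  pderM i (Wc j) y - pderM j (Wc i) y + brkt (Wc i y) (Wc j y)

/-- The linearized operator `L` of the rescaled Yang–Mills de Turck flow at the soliton `W`:
`(Lu)_j = Δu_j − (1/2)Σ_i y_i ∂_i u_j − (1/2)u_j + 2Σ_i [W_i, ∂_i u_j]
  + Σ_i [W_i, [W_i, u_j]] + 2Σ_i [u_i, F_{ij}]`. -/
def Lop (u : En n → Fin n → Mat n) (y : En n) (j : Fin n) : Mat n :=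
  lapM (fun z => u z j) y
    - (1 / 2 : ℝ) • (∑ i, y i • pderM i (fun z => u z j) y)
    - (1 / 2 : ℝ) • u y j
    + (2 : ℝ) • ∑ i, brkt (Wc i y) (pderM i (fun z => u z j) y)
    + ∑ i, brkt (Wc i y) (brkt (Wc i y) (u y j))
    + (2 : ℝ) • ∑ i, brkt (u y i) (Fc i j y)

/-- Squared Frobenius norm of a tuple of matrices: `‖u‖_F² = Σ_j ‖u_j‖_F²`. -/
def tnormSq (v : Fin n → Mat n) : ℝ := ∑ j, fipE (v j) (v j)

/-- The Gaussian weight `ρ(y) = e^{−|y|²/4}`. -/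
def gauss (y : En n) : ℝ := Real.exp (-‖y‖ ^ 2 / 4)

end

section helpers
variable {n : ℕ}

/-! ### Helper lemmas -/

lemma fipE_add (A B C : Mat n) : fipE A (B + C) = fipE A B + fipE A C := by
  simp [fipE, mul_add, Finset.sum_add_distrib]

lemma fipE_sub (A B C : Mat n) : fipE A (B - C) = fipE A B - fipE A C := by
  simp [fipE, mul_sub, Finset.sum_sub_distrib]

lemma fipE_neg (A B : Mat n) : fipE A (-B) = -fipE A B := by
  simp [fipE]

lemma fipE_smul (A B : Mat n) (c : ℝ) : fipE A (c • B) = c * fipE A B := by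
  simp only [fipE, Pi.smul_apply, smul_eq_mul, Finset.mul_sum]
  refine Finset.sum_congr rfl fun μ _ => Finset.sum_congr rfl fun ν _ => by ring

lemma fipE_sum (A : Mat n) (B : Fin n → Mat n) : fipE A (∑ i, B i) = ∑ i, fipE A (B i) := by
  simp only [fipE, Finset.sum_apply, Finset.mul_sum]
  rw [Finset.sum_comm]
  conv_rhs => rw [Finset.sum_comm]
  conv_lhs => rw [Finset.sum_comm]
  refine Finset.sum_congr rfl fun μ _ => ?_
  rw [Finset.sum_comm]

/-- Entrywise `ℓ¹` norm of a matrix. -/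
noncomputable def oneN (A : Mat n) : ℝ := ∑ μ, ∑ ν, |A μ ν|

lemma oneN_nonneg (A : Mat n) : 0 ≤ oneN A :=
  Finset.sum_nonneg fun _ _ => Finset.sum_nonneg fun _ _ => abs_nonneg _

lemma entry_le_oneN (A : Mat n) (μ ν : Fin n) : |A μ ν| ≤ oneN A := by
  refine le_trans ?_ (Finset.single_le_sum (f := fun μ => ∑ ν, |A μ ν|)
    (fun _ _ => Finset.sum_nonneg fun _ _ => abs_nonneg _) (Finset.mem_univ μ))
  exact Finset.single_le_sum (f := fun ν => |A μ ν|) (fun _ _ => abs_nonneg _) (Finset.mem_univ ν)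

lemma abs_fipE_le (A B : Mat n) : |fipE A B| ≤ oneN A * oneN B := by
  unfold fipE
  calc |∑ μ, ∑ ν, A μ ν * B μ ν| ≤ ∑ μ, ∑ ν, |A μ ν| * oneN B := by
        refine (Finset.abs_sum_le_sum_abs _ _).trans (Finset.sum_le_sum fun μ _ => ?_)
        refine (Finset.abs_sum_le_sum_abs _ _).trans (Finset.sum_le_sum fun ν _ => ?_)
        rw [abs_mul]
        exact mul_le_mul_of_nonneg_left (entry_le_oneN _ _ _) (abs_nonneg _)
    _ = oneN A * oneN B := by simp only [oneN, Finset.sum_mul]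

lemma oneN_sq_le (A : Mat n) : oneN A ^ 2 ≤ (n : ℝ) ^ 2 * fipE A A := by
  have h1 := sq_sum_le_card_mul_sum_sq (s := (Finset.univ : Finset (Fin n)))
    (f := fun μ => ∑ ν, |A μ ν|)
  have h2 : ∑ μ, (∑ ν, |A μ ν|) ^ 2 ≤ n * fipE A A := by
    unfold fipE
    rw [Finset.mul_sum]
    refine Finset.sum_le_sum fun μ _ => ?_
    have h := sq_sum_le_card_mul_sum_sq (s := (Finset.univ : Finset (Fin n)))
      (f := fun ν => |A μ ν|)
    simpa [sq] using h
  simp only [Finset.card_univ, Fintype.card_fin] at h1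
  unfold oneN
  calc _ ≤ _ := h1
    _ ≤ (n : ℝ) * (n * fipE A A) := mul_le_mul_of_nonneg_left h2 (by positivity)
    _ = _ := by ring

lemma oneN_brkt_le (W B : Mat n) (K : ℝ) (hW : ∀ μ ν, |W μ ν| ≤ K) :
    oneN (brkt W B) ≤ 2 * n * K * oneN B := by
  have e1 : ∀ μ ν, |brkt W B μ ν| ≤ ∑ k, (K * |B k ν| + K * |B μ k|) := by
    intro μ ν
    refine (Finset.abs_sum_le_sum_abs _ _).trans (Finset.sum_le_sum fun k _ => ?_)
    refine (abs_sub _ _).trans ?_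
    rw [abs_mul, abs_mul, mul_comm |B μ k|]
    exact add_le_add (mul_le_mul_of_nonneg_right (hW _ _) (abs_nonneg _))
      (mul_le_mul_of_nonneg_right (hW _ _) (abs_nonneg _))
  calc oneN (brkt W B) ≤ ∑ μ, ∑ ν, ∑ k, (K * |B k ν| + K * |B μ k|) :=
        Finset.sum_le_sum fun μ _ => Finset.sum_le_sum fun ν _ => e1 μ ν
    _ = 2 * n * K * oneN B := by
        simp only [Finset.sum_add_distrib, ← Finset.mul_sum]
        have : ∑ ν : Fin n, ∑ k, |B k ν| = oneN B := by rw [Finset.sum_comm]; rfl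
        rw [this]
        have h3 : ∑ μ : Fin n, ∑ ν : Fin n, ∑ k, |B μ k| = n * oneN B := by
          simp [oneN, Finset.mul_sum]
        rw [h3]
        simp
        ring

lemma brkt_swap (A B : Mat n) : brkt A B = - brkt B A := by
  ext μ ν
  simp [brkt]

lemma oneN_neg (A : Mat n) : oneN (-A) = oneN A := by simp [oneN]

lemma aC_pos (hn : 5 ≤ n) : 0 < aC n := by
  have : (5 : ℝ) ≤ n := by exact_mod_cast hn
  unfold aC
  have : 0 < Real.sqrt ((n : ℝ) - 2) := Real.sqrt_pos.2 (by linarith)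
  positivity

lemma bC_pos (hn : 5 ≤ n) (hn' : n ≤ 9) : 0 < bC n := by
  have h1 : (5 : ℝ) ≤ n := by exact_mod_cast hn
  have h2 : (n : ℝ) ≤ 9 := by exact_mod_cast hn'
  unfold bC
  have : Real.sqrt (2 * (n : ℝ) - 4) < (6 * n - 12) / (n + 2) := by
    rw [Real.sqrt_lt' (by apply div_pos <;> linarith), div_pow, lt_div_iff₀ (by positivity)]
    interval_cases n <;> norm_num
  rw [lt_div_iff₀ (by linarith)] at this
  linarith

/-- The denominator `a|y|² + b`. -/
noncomputable def den (y : En n) : ℝ := aC n * ‖y‖ ^ 2 + bC n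

lemma den_pos (ha : 0 < aC n) (hb : 0 < bC n) (y : En n) : 0 < den y := by
  unfold den; positivity

lemma den_hasFDerivAt (y : En n) :
    HasFDerivAt (den : En n → ℝ) (aC n • (2 • innerSL ℝ y)) y := by
  have := ((hasFDerivAt_id y).norm_sq.const_mul (aC n)).add_const (bC n)
  have e : (den : En n → ℝ) = fun x => aC n * (fun x => ‖id x‖ ^ 2) x + bC n := rfl
  rw [e]
  simpa using this

lemma coord_le (y : En n) (i : Fin n) : |y i| ≤ ‖y‖ := by
  simpa using PiLp.norm_apply_le y i

lemma sigmaM_hasFDerivAt (j μ ν : Fin n) (y : En n) :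
    HasFDerivAt (fun z : En n => sigmaM j z μ ν)
      ((if j = ν then (EuclideanSpace.proj μ : En n →L[ℝ] ℝ) else 0)
        - (if j = μ then (EuclideanSpace.proj ν : En n →L[ℝ] ℝ) else 0)) y := by
  unfold sigmaM
  refine HasFDerivAt.sub ?_ ?_
  · split_ifs
    · exact ((EuclideanSpace.proj μ : En n →L[ℝ] ℝ)).hasFDerivAt
    · exact hasFDerivAt_const _ _
  · split_ifs
    · exact ((EuclideanSpace.proj ν : En n →L[ℝ] ℝ)).hasFDerivAt
    · exact hasFDerivAt_const _ _

lemma pder_Wc (ha : 0 < aC n) (hb : 0 < bC n) (i j μ ν : Fin n) (y : En n) :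
    pderM i (Wc j) y μ ν =
      (sigmaM j (EuclideanSpace.single i 1) μ ν * den y
        - sigmaM j y μ ν * (aC n * (2 * y i))) / den y ^ 2 := by
  have h := (sigmaM_hasFDerivAt j μ ν y).mul
    ((hasDerivAt_inv (den_pos ha hb y).ne').comp_hasFDerivAt y (den_hasFDerivAt y))
  have h' : (fun z : En n => Wc j z μ ν) = fun z => sigmaM j z μ ν * (den z)⁻¹ := by
    funext z; simp [Wc, den, div_eq_mul_inv]
  have hd := (den_pos ha hb y).ne'
  unfold pderM pder
  rw [h']
  erw [h.fderiv]
  have hs : ((if j = ν then (EuclideanSpace.proj μ : En n →L[ℝ] ℝ) else 0)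
        - (if j = μ then (EuclideanSpace.proj ν : En n →L[ℝ] ℝ) else 0))
        (EuclideanSpace.single i 1) = sigmaM j (EuclideanSpace.single i 1) μ ν := by
    unfold sigmaM
    split_ifs <;> simp
  rw [add_apply, smul_apply, smul_apply, smul_apply, smul_apply, smul_apply, hs]
  simp [EuclideanSpace.inner_single_right]
  field_simp
  ring

lemma abs_sigmaM_le (j μ ν : Fin n) (y : En n) : |sigmaM j y μ ν| ≤ 2 * ‖y‖ := by
  unfold sigmaM
  have h1 := coord_le y μ
  have h2 := coord_le y ν
  have h3 := norm_nonneg y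
  refine (abs_sub _ _).trans ?_
  split_ifs <;> simp <;> linarith

lemma Wc_bound (ha : 0 < aC n) (hb : 0 < bC n) (j μ ν : Fin n) (y : En n) :
    |Wc j y μ ν| ≤ 1 / aC n + 1 / bC n := by
  have hd := den_pos ha hb y
  have h := abs_sigmaM_le j μ ν y
  have e : Wc j y μ ν = sigmaM j y μ ν / den y := rfl
  rw [e, abs_div, abs_of_pos hd, div_le_iff₀ hd]
  refine h.trans ?_
  have e2 : (1 / aC n + 1 / bC n) * den y
      = ‖y‖ ^ 2 + 1 + bC n / aC n + aC n / bC n * ‖y‖ ^ 2 := by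
    unfold den; field_simp; ring
  rw [e2]
  have : 0 ≤ bC n / aC n + aC n / bC n * ‖y‖ ^ 2 := by positivity
  nlinarith [sq_nonneg (‖y‖ - 1)]

lemma pder_Wc_bound (ha : 0 < aC n) (hb : 0 < bC n) (i j μ ν : Fin n) (y : En n) :
    |pderM i (Wc j) y μ ν| ≤ 6 / bC n := by
  have hd := den_pos ha hb y
  rw [pder_Wc ha hb, abs_div, abs_of_pos (by positivity : 0 < den y ^ 2),
    div_le_iff₀ (by positivity)]
  have h1 : |sigmaM j (EuclideanSpace.single i (1 : ℝ)) μ ν| ≤ 2 := by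
    simpa using abs_sigmaM_le j μ ν (EuclideanSpace.single i (1 : ℝ))
  have h2 := abs_sigmaM_le j μ ν y
  have h3 := coord_le y i
  have h4 : |sigmaM j y μ ν| * |y i| ≤ 2 * ‖y‖ * ‖y‖ :=
    mul_le_mul h2 h3 (abs_nonneg _) (by positivity)
  have h5 : aC n * ‖y‖ ^ 2 ≤ den y := by unfold den; linarith
  have h6 : bC n ≤ den y := by unfold den; nlinarith [sq_nonneg ‖y‖]
  refine (abs_sub _ _).trans ?_
  rw [abs_mul, abs_mul, abs_mul, abs_mul, abs_of_pos hd, abs_of_pos ha, abs_two]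
  have h7 : |sigmaM j (EuclideanSpace.single i (1 : ℝ)) μ ν| * den y ≤ 2 * den y :=
    mul_le_mul_of_nonneg_right h1 hd.le
  have h8 : |sigmaM j y μ ν| * (aC n * (2 * |y i|)) ≤ 4 * den y := by
    nlinarith [mul_le_mul_of_nonneg_left h4 ha.le]
  have h9 : 6 * den y ≤ 6 / bC n * den y ^ 2 := by
    rw [div_mul_eq_mul_div, le_div_iff₀ hb]
    nlinarith [mul_le_mul_of_nonneg_left h6 hd.le]
  linarith

lemma Fc_bound (hn : 5 ≤ n) (hn' : n ≤ 9) :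
    ∃ K : ℝ, 0 ≤ K ∧ (∀ i y (μ ν : Fin n), |Wc i y μ ν| ≤ K) ∧
      ∀ i j y (μ ν : Fin n), |Fc i j y μ ν| ≤ K := by
  have ha := aC_pos hn
  have hb := bC_pos hn hn'
  set M := 1 / aC n + 1 / bC n with hM
  have hM0 : 0 ≤ M := by positivity
  refine ⟨M + 12 / bC n + n * (2 * M ^ 2), by positivity, ?_, ?_⟩
  · intro i y μ ν
    have : 0 ≤ 12 / bC n + n * (2 * M ^ 2) := by positivity
    linarith [Wc_bound ha hb i μ ν y]
  · intro i j y μ ν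
    have h1 := pder_Wc_bound ha hb i j μ ν y
    have h2 := pder_Wc_bound ha hb j i μ ν y
    have h3 : |brkt (Wc i y) (Wc j y) μ ν| ≤ n * (2 * M ^ 2) := by
      have : ∑ _k : Fin n, (2 * M ^ 2) = n * (2 * M ^ 2) := by simp
      rw [← this]
      refine (Finset.abs_sum_le_sum_abs _ _).trans (Finset.sum_le_sum fun k _ => ?_)
      refine (abs_sub _ _).trans ?_
      rw [abs_mul, abs_mul, two_mul, sq]
      have w : ∀ i (μ ν : Fin n), |Wc i y μ ν| ≤ M := fun i μ ν => Wc_bound ha hb i μ ν y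
      exact add_le_add (mul_le_mul (w _ _ _) (w _ _ _) (abs_nonneg _) hM0)
        (mul_le_mul (w _ _ _) (w _ _ _) (abs_nonneg _) hM0)
    have e : Fc i j y μ ν = pderM i (Wc j) y μ ν - pderM j (Wc i) y μ ν
      + brkt (Wc i y) (Wc j y) μ ν := rfl
    rw [e]
    have h4 := abs_add_le (pderM i (Wc j) y μ ν - pderM j (Wc i) y μ ν)
      (brkt (Wc i y) (Wc j y) μ ν)
    have h5 := abs_sub (pderM i (Wc j) y μ ν) (pderM j (Wc i) y μ ν)
    have h6 : 12 / bC n = 6 / bC n + 6 / bC n := by ring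
    linarith

lemma den_cont : Continuous (den : En n → ℝ) := by unfold den; fun_prop

lemma sigmaM_cont (j μ ν : Fin n) : Continuous (fun z : En n => sigmaM j z μ ν) := by
  unfold sigmaM
  split_ifs <;> fun_prop

lemma Wc_cont (ha : 0 < aC n) (hb : 0 < bC n) (j μ ν : Fin n) :
    Continuous (fun z : En n => Wc j z μ ν) :=
  (sigmaM_cont j μ ν).div den_cont fun y => (den_pos ha hb y).ne'

lemma brkt_cont {A B : En n → Mat n} (hA : ∀ μ ν, Continuous fun z => A z μ ν)
    (hB : ∀ μ ν, Continuous fun z => B z μ ν) (μ ν : Fin n) :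
    Continuous fun z => brkt (A z) (B z) μ ν := by
  unfold brkt
  exact continuous_finsetSum _ fun k _ =>
    ((hA _ _).mul (hB _ _)).sub ((hB _ _).mul (hA _ _))

lemma fipE_cont {A B : En n → Mat n} (hA : ∀ μ ν, Continuous fun z => A z μ ν)
    (hB : ∀ μ ν, Continuous fun z => B z μ ν) :
    Continuous fun z => fipE (A z) (B z) := by
  unfold fipE
  exact continuous_finsetSum _ fun μ _ => continuous_finsetSum _ fun ν _ =>
    (hA _ _).mul (hB _ _)

lemma Fc_cont (ha : 0 < aC n) (hb : 0 < bC n) (i j μ ν : Fin n) :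
    Continuous (fun z : En n => Fc i j z μ ν) := by
  have hp : ∀ i j : Fin n, Continuous (fun z : En n => pderM i (Wc j) z μ ν) := by
    intro i j
    simp only [pder_Wc ha hb]
    refine Continuous.div ?_ (den_cont.pow 2) fun y => (pow_pos (den_pos ha hb y) 2).ne'
    have := sigmaM_cont j μ ν
    have := den_cont (n := n)
    fun_prop
  exact ((hp i j).sub (hp j i)).add (brkt_cont (Wc_cont ha hb i) (Wc_cont ha hb j) μ ν)

lemma gauss_hasFDerivAt (y : En n) :
    HasFDerivAt (gauss : En n → ℝ) (gauss y • ((-1/4 : ℝ) • (2 • innerSL ℝ y))) y := by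
  have := ((hasFDerivAt_id y).norm_sq.const_mul (-1/4 : ℝ)).exp
  have e : (gauss : En n → ℝ) = fun x => Real.exp (-1/4 * ‖x‖ ^ 2) := by
    funext x; unfold gauss; congr 1; ring
  rw [e]
  simpa using this

lemma gauss_cont : Continuous (gauss : En n → ℝ) := by unfold gauss; fun_prop

lemma pder_contDiff {f : En n → ℝ} (hf : ContDiff ℝ (⊤ : ℕ∞) f) (i : Fin n) :
    ContDiff ℝ (⊤ : ℕ∞) (fun z => pder i f z) := by
  unfold pder
  exact (hf.fderiv_right (by simp)).clm_apply contDiff_const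

lemma pder_support {f : En n → ℝ} {y : En n} (hy : y ∉ tsupport f) (i : Fin n) :
    pder i f y = 0 := by
  unfold pder
  rw [fderiv_of_notMem_tsupport ℝ hy]; rfl

/-- The scalar expression which times the Gaussian is minus a divergence. -/
noncomputable def dvg (i : Fin n) (f : En n → ℝ) (y : En n) : ℝ :=
  -(f y * pder i (fun z => pder i f z) y) + 1 / 2 * (f y * (y i * pder i f y)) - pder i f y ^ 2

lemma dvg_integrable {f : En n → ℝ} (hf : ContDiff ℝ (⊤ : ℕ∞) f) (hc : HasCompactSupport f)
    (i : Fin n) : MeasureTheory.Integrable (fun y => dvg i f y * gauss y) := by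
  have h0 := hf.continuous
  have h1 := (pder_contDiff hf i).continuous
  have h2 := (pder_contDiff (pder_contDiff hf i) i).continuous
  have h3 := gauss_cont (n := n)
  refine Continuous.integrable_of_hasCompactSupport ?_ ?_
  · unfold dvg
    fun_prop
  · refine HasCompactSupport.intro (K := tsupport f) hc fun y hy => ?_
    simp [dvg, pder_support hy, image_eq_zero_of_notMem_tsupport hy]

lemma dvg_integral {f : En n → ℝ} (hf : ContDiff ℝ (⊤ : ℕ∞) f) (hc : HasCompactSupport f)
    (i : Fin n) : ∫ y, dvg i f y * gauss y = 0 := by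
  have hint := dvg_integrable hf hc i
  have hp := pder_contDiff hf i
  have hd : ∀ y, HasFDerivAt (fun z => f z * pder i f z * gauss z) _ y := fun y =>
    (((hf.differentiable (by simp)) y).hasFDerivAt.mul
      ((hp.differentiable (by simp)) y).hasFDerivAt).mul (gauss_hasFDerivAt y)
  have key : ∀ y, fderiv ℝ (fun z => f z * pder i f z * gauss z) y (EuclideanSpace.single i 1)
      = - (dvg i f y * gauss y) := by
    intro y
    rw [(hd y).fderiv]
    have e2 : (fderiv ℝ (fun z => pder i f z) y) (EuclideanSpace.single i 1)
      = pder i (fun z => pder i f z) y := rfl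
    have e1 : (fderiv ℝ f y) (EuclideanSpace.single i 1) = pder i f y := rfl
    simp [e1, e2, dvg, EuclideanSpace.inner_single_right]
    ring
  have h := integral_mul_fderiv_eq_neg_fderiv_mul_of_integrable (𝕜 := ℝ)
    (μ := (MeasureTheory.volume : MeasureTheory.Measure (En n)))
    (f := fun _ => (1 : ℝ)) (g := fun z => f z * pder i f z * gauss z)
    (v := EuclideanSpace.single i 1) (by simp)
    (by simp only [key, one_mul]; exact hint.neg)
    (by
      refine Continuous.integrable_of_hasCompactSupport ?_ ?_
      · have h0 := hf.continuous
        have h1 := hp.continuous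
        have h3 := gauss_cont (n := n)
        fun_prop
      · refine HasCompactSupport.intro (K := tsupport f) hc fun y hy => ?_
        simp [image_eq_zero_of_notMem_tsupport hy])
    (by simp) (fun y _ => (hd y).differentiableAt)
  simp only [key, one_mul] at h
  simpa [MeasureTheory.integral_neg] using h

lemma lapM_eq (f : En n → Mat n) (y : En n) : lapM f y = ∑ i, pderM i (pderM i f) y := by
  ext μ ν
  simp [lapM, lapS, pderM, Finset.sum_apply]

lemma sum_dvg (f : En n → Mat n) (y : En n) (i : Fin n) :
    ∑ μ, ∑ ν, dvg i (fun z => f z μ ν) y =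
      -fipE (f y) (pderM i (pderM i f) y) + 1 / 2 * (y i * fipE (f y) (pderM i f y))
        - fipE (pderM i f y) (pderM i f y) := by
  simp only [fipE, dvg, Finset.mul_sum, ← Finset.sum_neg_distrib, ← Finset.sum_add_distrib,
    ← Finset.sum_sub_distrib, pderM]
  refine Finset.sum_congr rfl fun μ _ => Finset.sum_congr rfl fun ν _ => by ring

/-- The zeroth- and first-order remainder of the quadratic form. -/
noncomputable def remQ (u : En n → Fin n → Mat n) (y : En n) : ℝ :=
  1 / 2 * tnormSq (u y)
    - ∑ j, ∑ i, 2 * fipE (u y j) (brkt (Wc i y) (pderM i (fun z => u z j) y))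
    - ∑ j, ∑ i, fipE (u y j) (brkt (Wc i y) (brkt (Wc i y) (u y j)))
    - ∑ j, ∑ i, 2 * fipE (u y j) (brkt (u y i) (Fc i j y))

/-- The gradient square. -/
noncomputable def gradQ (u : En n → Fin n → Mat n) (y : En n) : ℝ :=
  ∑ i, ∑ j, fipE (pderM i (fun z => u z j) y) (pderM i (fun z => u z j) y)

lemma decomp (u : En n → Fin n → Mat n) (y : En n) :
    ∑ j, fipE (u y j) (-(Lop u y j)) =
      (∑ j, ∑ i, ∑ μ, ∑ ν, dvg i (fun z => u z j μ ν) y) + (gradQ u y + remQ u y) := by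
  have hj : ∀ j, fipE (u y j) (-(Lop u y j)) =
      (∑ i, ∑ μ, ∑ ν, dvg i (fun z => u z j μ ν) y)
      + (∑ i, fipE (pderM i (fun z => u z j) y) (pderM i (fun z => u z j) y))
      + (1 / 2 * fipE (u y j) (u y j)
        - (∑ i, 2 * fipE (u y j) (brkt (Wc i y) (pderM i (fun z => u z j) y)))
        - (∑ i, fipE (u y j) (brkt (Wc i y) (brkt (Wc i y) (u y j))))
        - ∑ i, 2 * fipE (u y j) (brkt (u y i) (Fc i j y))) := by
    intro j
    have h : ∀ i, ∑ μ, ∑ ν, dvg i (fun z => u z j μ ν) y = _ :=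
      fun i => sum_dvg (fun z => u z j) y i
    simp only [h]
    unfold Lop
    simp only [fipE_neg, fipE_add, fipE_sub, fipE_smul, fipE_sum, lapM_eq,
      Finset.sum_add_distrib, Finset.sum_sub_distrib, Finset.sum_neg_distrib, ← Finset.mul_sum]
    ring
  simp only [hj, Finset.sum_add_distrib, Finset.sum_sub_distrib]
  have hg : gradQ u y =
      ∑ j, ∑ i, fipE (pderM i (fun z => u z j) y) (pderM i (fun z => u z j) y) := by
    unfold gradQ; rw [Finset.sum_comm]
  rw [hg]
  unfold remQ tnormSq
  rw [Finset.mul_sum]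
  ring

lemma rem_bound (hn : 5 ≤ n) (hn' : n ≤ 9) :
    ∃ C : ℝ, ∀ (u : En n → Fin n → Mat n) (y : En n),
      |remQ u y| ≤ 1 / 2 * gradQ u y + C * tnormSq (u y) := by
  obtain ⟨K, hK0, hW, hF⟩ := Fc_bound hn hn'
  have hn0 : (0 : ℝ) < n := by
    have : 0 < n := by omega
    exact_mod_cast this
  set c : ℝ := 2 * n * K with hc
  have hc0 : 0 ≤ c := by positivity
  refine ⟨1 / 2 + 2 * n ^ 5 * c ^ 2 + n ^ 3 * c ^ 2 + 2 * n ^ 3 * c, fun u y => ?_⟩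
  have hT : ∀ j, oneN (u y j) ^ 2 ≤ (n : ℝ) ^ 2 * fipE (u y j) (u y j) := fun j => oneN_sq_le _
  have hT0 : 0 ≤ tnormSq (u y) := Finset.sum_nonneg fun j _ => Finset.sum_nonneg fun _ _ =>
    Finset.sum_nonneg fun _ _ => mul_self_nonneg _
  have b1 : |∑ j, ∑ i, 2 * fipE (u y j) (brkt (Wc i y) (pderM i (fun z => u z j) y))|
      ≤ 1 / 2 * gradQ u y + 2 * n ^ 5 * c ^ 2 * tnormSq (u y) := by
    have e : 1 / 2 * gradQ u y + 2 * n ^ 5 * c ^ 2 * tnormSq (u y)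
        = ∑ j, ∑ i, (1 / 2 * fipE (pderM i (fun z => u z j) y) (pderM i (fun z => u z j) y)
          + 2 * n ^ 4 * c ^ 2 * fipE (u y j) (u y j)) := by
      simp only [Finset.sum_add_distrib, ← Finset.mul_sum, gradQ, tnormSq, Finset.sum_const,
        Finset.card_univ, Fintype.card_fin, nsmul_eq_mul]
      rw [Finset.sum_comm]
      ring
    rw [e]
    refine (Finset.abs_sum_le_sum_abs _ _).trans (Finset.sum_le_sum fun j _ => ?_)
    refine (Finset.abs_sum_le_sum_abs _ _).trans (Finset.sum_le_sum fun i _ => ?_)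
    set p := pderM i (fun z => u z j) y
    have h1 := abs_fipE_le (u y j) (brkt (Wc i y) p)
    have h2 := oneN_brkt_le (Wc i y) p K (hW i y)
    have h3 := mul_le_mul_of_nonneg_left h2 (oneN_nonneg (u y j))
    have h4 := oneN_sq_le p
    have h5 := hT j
    rw [abs_mul, abs_two]
    have h6 : 2 * (oneN (u y j) * (c * oneN p))
        ≤ 1 / (2 * n ^ 2) * oneN p ^ 2 + 2 * n ^ 2 * c ^ 2 * oneN (u y j) ^ 2 := by
      have e1 : 1 / (2 * n ^ 2) * oneN p ^ 2 + 2 * n ^ 2 * c ^ 2 * oneN (u y j) ^ 2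
          - 2 * (oneN (u y j) * (c * oneN p))
          = 1 / (2 * n ^ 2) * (oneN p - 2 * n ^ 2 * c * oneN (u y j)) ^ 2 := by
        field_simp
        ring
      have : 0 ≤ 1 / (2 * (n : ℝ) ^ 2) * (oneN p - 2 * n ^ 2 * c * oneN (u y j)) ^ 2 := by
        positivity
      linarith
    have h7 : 1 / (2 * (n : ℝ) ^ 2) * oneN p ^ 2 ≤ 1 / 2 * fipE p p := by
      calc _ ≤ 1 / (2 * (n : ℝ) ^ 2) * (n ^ 2 * fipE p p) :=
            mul_le_mul_of_nonneg_left h4 (by positivity)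
        _ = _ := by field_simp
    have h8 : 2 * (n : ℝ) ^ 2 * c ^ 2 * oneN (u y j) ^ 2
        ≤ 2 * n ^ 4 * c ^ 2 * fipE (u y j) (u y j) := by
      calc _ ≤ 2 * (n : ℝ) ^ 2 * c ^ 2 * (n ^ 2 * fipE (u y j) (u y j)) :=
            mul_le_mul_of_nonneg_left h5 (by positivity)
        _ = _ := by ring
    linarith
  have b2 : |∑ j, ∑ i, fipE (u y j) (brkt (Wc i y) (brkt (Wc i y) (u y j)))|
      ≤ n ^ 3 * c ^ 2 * tnormSq (u y) := by
    have e : n ^ 3 * c ^ 2 * tnormSq (u y)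
        = ∑ j, ∑ _i : Fin n, c ^ 2 * (n ^ 2 * fipE (u y j) (u y j)) := by
      simp only [← Finset.mul_sum, tnormSq, Finset.sum_const,
        Finset.card_univ, Fintype.card_fin, nsmul_eq_mul]
      ring
    rw [e]
    refine (Finset.abs_sum_le_sum_abs _ _).trans (Finset.sum_le_sum fun j _ => ?_)
    refine (Finset.abs_sum_le_sum_abs _ _).trans (Finset.sum_le_sum fun i _ => ?_)
    have h1 := abs_fipE_le (u y j) (brkt (Wc i y) (brkt (Wc i y) (u y j)))
    have h2 := oneN_brkt_le (Wc i y) (u y j) K (hW i y)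
    have h2' := oneN_brkt_le (Wc i y) (brkt (Wc i y) (u y j)) K (hW i y)
    have h3 : oneN (brkt (Wc i y) (brkt (Wc i y) (u y j))) ≤ c * (c * oneN (u y j)) :=
      h2'.trans (mul_le_mul_of_nonneg_left h2 hc0)
    have h4 := mul_le_mul_of_nonneg_left h3 (oneN_nonneg (u y j))
    have h5 := mul_le_mul_of_nonneg_left (hT j) (sq_nonneg c)
    calc _ ≤ _ := h1
      _ ≤ _ := h4
      _ = c ^ 2 * oneN (u y j) ^ 2 := by ring
      _ ≤ _ := h5
  have b3 : |∑ j, ∑ i, 2 * fipE (u y j) (brkt (u y i) (Fc i j y))|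
      ≤ 2 * n ^ 3 * c * tnormSq (u y) := by
    have e : 2 * n ^ 3 * c * tnormSq (u y)
        = ∑ j, ∑ i, c * (n ^ 2 * fipE (u y j) (u y j) + n ^ 2 * fipE (u y i) (u y i)) := by
      simp only [← Finset.mul_sum, Finset.sum_add_distrib, tnormSq, Finset.sum_const,
        Finset.card_univ, Fintype.card_fin, nsmul_eq_mul]
      ring
    rw [e]
    refine (Finset.abs_sum_le_sum_abs _ _).trans (Finset.sum_le_sum fun j _ => ?_)
    refine (Finset.abs_sum_le_sum_abs _ _).trans (Finset.sum_le_sum fun i _ => ?_)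
    have h1 := abs_fipE_le (u y j) (brkt (u y i) (Fc i j y))
    have h2 := oneN_brkt_le (Fc i j y) (u y i) K (hF i j y)
    rw [brkt_swap (u y i), oneN_neg, ← brkt_swap] at h1
    rw [abs_mul, abs_two]
    have h4 := mul_le_mul_of_nonneg_left h2 (oneN_nonneg (u y j))
    calc _ ≤ 2 * (oneN (u y j) * (c * oneN (u y i))) := by linarith
      _ = c * (2 * oneN (u y j) * oneN (u y i)) := by ring
      _ ≤ _ := mul_le_mul_of_nonneg_left
          ((two_mul_le_add_sq _ _).trans (add_le_add (hT j) (hT i))) hc0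
  unfold remQ
  rw [abs_le] at *
  constructor <;> linarith [b1.1, b1.2, b2.1, b2.2, b3.1, b3.2]

end helpers

open MeasureTheory in
/-- Gårding-type bounds for the quadratic form of `L`: there is `C = C(n)` such that for every
compactly supported smooth skew-valued `u`,
`(1/2)∫ Σ_{i,j}‖∂_i u_j‖_F² ρ − C∫‖u‖_F² ρ ≤ ∫⟨u, −Lu⟩_F ρ ≤ 2∫ Σ_{i,j}‖∂_i u_j‖_F² ρ + C∫‖u‖_F² ρ`. -/
theorem garding_bounds (n : ℕ) (hn : 5 ≤ n) (hn' : n ≤ 9) :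
    ∃ C : ℝ, ∀ u : En n → Fin n → Mat n,
      ContDiff ℝ (⊤ : ℕ∞) u → HasCompactSupport u → (∀ y j, skewM (u y j)) →
      (1 / 2) * (∫ y : En n,
            (∑ i, ∑ j, fipE (pderM i (fun z => u z j) y) (pderM i (fun z => u z j) y)) * gauss y)
          - C * (∫ y : En n, tnormSq (u y) * gauss y)
        ≤ (∫ y : En n, (∑ j, fipE (u y j) (-(Lop u y j))) * gauss y) ∧
      (∫ y : En n, (∑ j, fipE (u y j) (-(Lop u y j))) * gauss y)
        ≤ 2 * (∫ y : En n,
            (∑ i, ∑ j, fipE (pderM i (fun z => u z j) y) (pderM i (fun z => u z j) y)) * gauss y)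
          + C * (∫ y : En n, tnormSq (u y) * gauss y) := by
  obtain ⟨C, hC⟩ := rem_bound hn hn'
  refine ⟨C, fun u hu hc _ => ?_⟩
  have ha := aC_pos hn
  have hb := bC_pos hn hn'
  have hU : ∀ j μ ν, ContDiff ℝ (⊤ : ℕ∞) (fun z => u z j μ ν) := by
    intro j μ ν
    exact contDiff_pi.1 (contDiff_pi.1 (contDiff_pi.1 hu j) μ) ν
  have hsub : ∀ j μ ν, tsupport (fun z => u z j μ ν) ⊆ tsupport u := by
    intro j μ ν
    refine closure_mono fun z hz => ?_
    simp only [Function.mem_support] at hz ⊢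
    intro h
    exact hz (by simp [h])
  have hUc : ∀ j μ ν, HasCompactSupport (fun z => u z j μ ν) := fun j μ ν =>
    IsCompact.of_isClosed_subset hc (isClosed_tsupport _) (hsub j μ ν)
  have cU : ∀ j μ ν, Continuous (fun z => u z j μ ν) := fun j μ ν => (hU j μ ν).continuous
  have cP : ∀ i j μ ν, Continuous (fun y => pderM i (fun z => u z j) y μ ν) :=
    fun i j μ ν => (pder_contDiff (hU j μ ν) i).continuous
  have zU : ∀ y, y ∉ tsupport u → u y = 0 := fun y hy => image_eq_zero_of_notMem_tsupport hy
  have zP : ∀ y, y ∉ tsupport u → ∀ i j, pderM i (fun z => u z j) y = 0 := by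
    intro y hy i j
    ext μ ν
    exact pder_support (fun h => hy (hsub j μ ν h)) i
  have cW := fun i => Wc_cont (n := n) ha hb i
  have cT : Continuous fun y => tnormSq (u y) :=
    continuous_finsetSum _ fun j _ => fipE_cont (cU j) (cU j)
  have cG : Continuous fun y => gradQ u y :=
    continuous_finsetSum _ fun i _ => continuous_finsetSum _ fun j _ => fipE_cont (cP i j) (cP i j)
  have cR : Continuous fun y => remQ u y := by
    refine (((continuous_const.mul cT).sub ?_).sub ?_).sub ?_
    · exact continuous_finsetSum _ fun j _ => continuous_finsetSum _ fun i _ =>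
        continuous_const.mul (fipE_cont (cU j) (brkt_cont (cW i) (cP i j)))
    · exact continuous_finsetSum _ fun j _ => continuous_finsetSum _ fun i _ =>
        fipE_cont (cU j) (brkt_cont (cW i) (brkt_cont (cW i) (cU j)))
    · exact continuous_finsetSum _ fun j _ => continuous_finsetSum _ fun i _ =>
        continuous_const.mul (fipE_cont (cU j) (brkt_cont (cU i) (Fc_cont ha hb i j)))
  have iT : Integrable fun y => tnormSq (u y) * gauss y := by
    refine (cT.mul gauss_cont).integrable_of_hasCompactSupport ?_
    refine HasCompactSupport.intro (K := tsupport u) hc fun y hy => ?_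
    simp [zU y hy, tnormSq, fipE]
  have iG : Integrable fun y => gradQ u y * gauss y := by
    refine (cG.mul gauss_cont).integrable_of_hasCompactSupport ?_
    refine HasCompactSupport.intro (K := tsupport u) hc fun y hy => ?_
    simp [zP y hy, gradQ, fipE]
  have iR : Integrable fun y => remQ u y * gauss y := by
    refine (cR.mul gauss_cont).integrable_of_hasCompactSupport ?_
    refine HasCompactSupport.intro (K := tsupport u) hc fun y hy => ?_
    simp [zU y hy, remQ, tnormSq, fipE]
  have iD : ∀ j i μ ν, Integrable fun y => dvg i (fun z => u z j μ ν) y * gauss y :=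
    fun j i μ ν => dvg_integrable (hU j μ ν) (hUc j μ ν) i
  have hQ : (∫ y : En n, (∑ j, fipE (u y j) (-(Lop u y j))) * gauss y)
      = (∫ y, gradQ u y * gauss y) + ∫ y, remQ u y * gauss y := by
    simp only [decomp, add_mul, Finset.sum_mul]
    have i1 : Integrable fun y : En n =>
        ∑ j, ∑ i, ∑ μ, ∑ ν, dvg i (fun z => u z j μ ν) y * gauss y :=
      integrable_finsetSum _ fun j _ => integrable_finsetSum _ fun i _ =>
        integrable_finsetSum _ fun μ _ => integrable_finsetSum _ fun ν _ => iD j i μ ν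
    have i0 : ∫ y : En n, ∑ j, ∑ i, ∑ μ, ∑ ν, dvg i (fun z => u z j μ ν) y * gauss y = 0 := by
      rw [integral_finsetSum _ fun j _ => integrable_finsetSum _ fun i _ =>
        integrable_finsetSum _ fun μ _ => integrable_finsetSum _ fun ν _ => iD j i μ ν]
      refine Finset.sum_eq_zero fun j _ => ?_
      rw [integral_finsetSum _ fun i _ =>
        integrable_finsetSum _ fun μ _ => integrable_finsetSum _ fun ν _ => iD j i μ ν]
      refine Finset.sum_eq_zero fun i _ => ?_
      rw [integral_finsetSum _ fun μ _ => integrable_finsetSum _ fun ν _ => iD j i μ ν]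
      refine Finset.sum_eq_zero fun μ _ => ?_
      rw [integral_finsetSum _ fun ν _ => iD j i μ ν]
      exact Finset.sum_eq_zero fun ν _ => dvg_integral (hU j μ ν) (hUc j μ ν) i
    have i2 : Integrable fun y : En n => gradQ u y * gauss y + remQ u y * gauss y := iG.add iR
    rw [integral_add i1 i2, i0, integral_add iG iR, zero_add]
  have hg : ∀ y : En n, 0 ≤ gauss y := fun y => (Real.exp_pos _).le
  have up : ∫ y, remQ u y * gauss y
      ≤ 1 / 2 * (∫ y, gradQ u y * gauss y) + C * ∫ y, tnormSq (u y) * gauss y := by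
    rw [← integral_const_mul, ← integral_const_mul,
      ← integral_add (iG.const_mul _) (iT.const_mul _)]
    refine integral_mono iR ((iG.const_mul _).add (iT.const_mul _)) fun y => ?_
    have := mul_le_mul_of_nonneg_right (abs_le.1 (hC u y)).2 (hg y)
    simp only
    linarith
  have lo : -(1 / 2 * (∫ y, gradQ u y * gauss y) + C * ∫ y, tnormSq (u y) * gauss y)
      ≤ ∫ y, remQ u y * gauss y := by
    rw [← integral_const_mul, ← integral_const_mul,
      ← integral_add (iG.const_mul _) (iT.const_mul _), ← integral_neg]
    refine integral_mono ((iG.const_mul _).add (iT.const_mul _)).neg iR fun y => ?_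
    have := mul_le_mul_of_nonneg_right (abs_le.1 (hC u y)).1 (hg y)
    simp only
    linarith
  have hG0 : 0 ≤ ∫ y, gradQ u y * gauss y :=
    integral_nonneg fun y => mul_nonneg (Finset.sum_nonneg fun _ _ => Finset.sum_nonneg
      fun _ _ => Finset.sum_nonneg fun _ _ => Finset.sum_nonneg fun _ _ => mul_self_nonneg _) (hg y)
  have eG : (∫ y : En n, (∑ i, ∑ j, fipE (pderM i (fun z => u z j) y)
      (pderM i (fun z => u z j) y)) * gauss y) = ∫ y, gradQ u y * gauss y := rfl
  rw [hQ, eG]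
  constructor <;> linarith
end

section
/- Exponentially weighted bound for forward Duhamel integrals: let 0 < δ < λ₀ ≤ λ be real numbers and let h: [0,∞) → ℝ be measurable with ∫₀^∞ e^{2δσ} h(σ)² dσ < ∞. Then for every τ ≥ 0, λ·(∫₀^τ e^{λ(σ−τ)} h(σ) dσ)² ≤ (λ₀/(2(λ₀ − δ)))·e^{−2δτ}·∫₀^∞ e^{2δσ} h(σ)² dσ. -/
open MeasureTheory

/-- Exponentially weighted bound for forward Duhamel integrals: if `0 < δ < λ₀ ≤ λ` and
`h : [0,∞) → ℝ` is measurable with `∫₀^∞ e^{2δσ} h(σ)² dσ < ∞`, then for every `τ ≥ 0`,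
`λ·(∫₀^τ e^{λ(σ−τ)} h(σ) dσ)² ≤ (λ₀/(2(λ₀ − δ)))·e^{−2δτ}·∫₀^∞ e^{2δσ} h(σ)² dσ`. -/
theorem forward_duhamel_bound (δ lam₀ lam : ℝ) (hδ : 0 < δ) (hδ₀ : δ < lam₀) (h₀ : lam₀ ≤ lam)
    (h : ℝ → ℝ) (hmeas : Measurable h)
    (hint : IntegrableOn (fun σ => Real.exp (2 * δ * σ) * h σ ^ 2) (Set.Ici 0)) :
    ∀ τ : ℝ, 0 ≤ τ →
      lam * (∫ σ in (0 : ℝ)..τ, Real.exp (lam * (σ - τ)) * h σ) ^ 2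
        ≤ (lam₀ / (2 * (lam₀ - δ))) * Real.exp (-2 * δ * τ) *
            ∫ σ in Set.Ici (0 : ℝ), Real.exp (2 * δ * σ) * h σ ^ 2 := by
  intro τ hτ
  have hlδ : 0 < lam - δ := by linarith
  have hl0δ : 0 < lam₀ - δ := by linarith
  rw [intervalIntegral.integral_of_le hτ]
  set μ := (volume : Measure ℝ).restrict (Set.Ioc 0 τ) with hμ
  set f : ℝ → ℝ := fun σ => Real.exp (lam * (σ - τ) - δ * σ) with hf
  set g : ℝ → ℝ := fun σ => Real.exp (δ * σ) * h σ with hg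
  have hgsq : ∀ σ, g σ ^ 2 = Real.exp (2 * δ * σ) * h σ ^ 2 := by
    intro σ
    simp only [hg, mul_pow, ← Real.exp_nat_mul]
    congr 2
    push_cast; ring
  have hfsq : ∀ σ, f σ ^ 2 = Real.exp (2 * lam * (σ - τ) - 2 * δ * σ) := by
    intro σ
    simp only [hf, ← Real.exp_nat_mul]
    congr 1
    push_cast; ring
  have hfg : ∀ σ, Real.exp (lam * (σ - τ)) * h σ = f σ * g σ := by
    intro σ
    simp only [hf, hg, ← mul_assoc, ← Real.exp_add]
    congr 2
    ring
  have hsub : Set.Ioc 0 τ ⊆ Set.Ici (0 : ℝ) := fun x hx => hx.1.le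
  have hgm : Measurable g := by fun_prop
  have hfc : Continuous f := by fun_prop
  have hg2 : Integrable (fun σ => g σ ^ 2) μ := by
    simp only [hgsq]
    exact hint.mono_set hsub
  have hf2 : Integrable (fun σ => f σ ^ 2) μ :=
    (hfc.pow 2).integrableOn_Ioc
  have hfgI : Integrable (fun σ => f σ * g σ) μ := by
    refine (hf2.add hg2).mono' (hfc.measurable.mul hgm).aestronglyMeasurable ?_
    refine Filter.Eventually.of_forall fun σ => ?_
    simp only [Real.norm_eq_abs, Pi.add_apply]
    rw [abs_le]
    constructor <;> nlinarith [sq_nonneg (f σ + g σ), sq_nonneg (f σ - g σ), sq_nonneg (f σ), sq_nonneg (g σ)]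
  simp only [hfg]
  have hCS : (∫ σ, f σ * g σ ∂μ) ^ 2 ≤ (∫ σ, f σ ^ 2 ∂μ) * ∫ σ, g σ ^ 2 ∂μ := by
    have key : ∀ t : ℝ, 0 ≤ (∫ σ, f σ ^ 2 ∂μ) * (t * t) + (2 * ∫ σ, f σ * g σ ∂μ) * t
        + ∫ σ, g σ ^ 2 ∂μ := by
      intro t
      have h1 : 0 ≤ ∫ σ, (f σ ^ 2 * (t * t) + f σ * g σ * (2 * t)) + g σ ^ 2 ∂μ :=
        integral_nonneg fun σ => by
          change 0 ≤ (f σ ^ 2 * (t * t) + f σ * g σ * (2 * t)) + g σ ^ 2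
          nlinarith [sq_nonneg (f σ * t + g σ)]
      have hI : Integrable (fun σ => f σ ^ 2 * (t * t) + f σ * g σ * (2 * t)) μ :=
        (hf2.mul_const _).add (hfgI.mul_const _)
      rw [integral_add hI hg2,
        integral_add (hf2.mul_const _) (hfgI.mul_const _), integral_mul_const,
        integral_mul_const] at h1
      linarith
    have := discrim_le_zero key
    unfold discrim at this
    nlinarith
  have hA : ∫ σ, f σ ^ 2 ∂μ ≤ Real.exp (-2 * δ * τ) / (2 * (lam - δ)) := by
    have hd : ∀ x ∈ Set.uIcc 0 τ, HasDerivAt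
        (fun σ => Real.exp (2 * lam * (σ - τ) - 2 * δ * σ) / (2 * (lam - δ)))
        (Real.exp (2 * lam * (x - τ) - 2 * δ * x)) x := by
      intro x _
      have h1 : HasDerivAt (fun σ : ℝ => 2 * lam * (σ - τ) - 2 * δ * σ)
          (2 * lam * 1 - 2 * δ * 1) x :=
        (((hasDerivAt_id x).sub_const τ).const_mul (2 * lam)).sub
          ((hasDerivAt_id x).const_mul (2 * δ))
      refine (h1.exp.div_const (2 * (lam - δ))).congr_deriv ?_
      have hne : 2 * (lam - δ) ≠ 0 := by positivity
      rw [div_eq_iff hne]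
      ring
    have := intervalIntegral.integral_eq_sub_of_hasDerivAt hd
      (Continuous.intervalIntegrable (by fun_prop) _ _)
    simp only [hfsq]
    rw [hμ, ← intervalIntegral.integral_of_le hτ, this]
    have e : 2 * lam * (τ - τ) - 2 * δ * τ = -2 * δ * τ := by ring
    rw [e]
    have : 0 ≤ Real.exp (2 * lam * (0 - τ) - 2 * δ * 0) / (2 * (lam - δ)) := by positivity
    linarith
  have hC : ∫ σ, g σ ^ 2 ∂μ ≤ ∫ σ in Set.Ici (0 : ℝ), Real.exp (2 * δ * σ) * h σ ^ 2 := by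
    simp only [hgsq]
    exact setIntegral_mono_set hint (Filter.Eventually.of_forall fun σ => by positivity)
      hsub.eventuallyLE
  have hC0 : 0 ≤ ∫ σ, g σ ^ 2 ∂μ := integral_nonneg fun σ => sq_nonneg _
  have hlam : 0 < lam := by linarith
  have hq : lam / (2 * (lam - δ)) ≤ lam₀ / (2 * (lam₀ - δ)) := by
    rw [div_le_div_iff₀ (by positivity) (by positivity)]
    nlinarith
  set C := ∫ σ in Set.Ici (0 : ℝ), Real.exp (2 * δ * σ) * h σ ^ 2
  have hCC : 0 ≤ C := hC0.trans hC
  calc lam * (∫ σ, f σ * g σ ∂μ) ^ 2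
      ≤ lam * (Real.exp (-2 * δ * τ) / (2 * (lam - δ)) * C) := by
        gcongr
        exact hCS.trans (mul_le_mul hA hC hC0 (by positivity))
    _ = lam / (2 * (lam - δ)) * Real.exp (-2 * δ * τ) * C := by ring
    _ ≤ _ := by gcongr
end
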